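/- For every natural number n and every real number δ, ∫₀^∞ e^{(iδ−1)x} Lₙ(2x) dx = i·(δ−i)ⁿ / (δ+i)^{n+1}, where Lₙ is the n-th Laguerre polynomial. -/

import Mathlib

open MeasureTheory Set

/-- The `n`-th Laguerre polynomial `Lₙ(x) = Σ_{k=0}^{n} (n choose k) (−x)^k / k!`,
as a function on `ℂ`. -/
noncomputable def laguerreC (n : ℕ) (x : ℂ) : ℂ :=
  ∑ k ∈ Finset.range (n + 1), (n.choose k : ℂ) * (-x) ^ k / (Nat.factorial k : ℂ)

/-!
For `Re s > 0`, the Laplace transform of `x ^ k` is `k! / s ^ (k + 1)`, so its factorial cancels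
the one in the coefficients of `Lₙ`; the binomial theorem then sums the Laplace transform of
`Lₙ(c x)` to `(s - c) ^ n / s ^ (n + 1)`. The Fourier image is the case `s = 1 - iδ`, `c = 2`.
-/

theorem sum_choose_mul_neg_pow_div_pow_succ {K : Type*} [Field K] {s : K} (hs : s ≠ 0) (c : K)
    (n : ℕ) :
    ∑ k ∈ Finset.range (n + 1), n.choose k * (-c) ^ k / s ^ (k + 1) =
      (s - c) ^ n / s ^ (n + 1) := by
  calc ∑ k ∈ Finset.range (n + 1), n.choose k * (-c) ^ k / s ^ (k + 1)
      = (-c / s + 1) ^ n / s := by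
        rw [add_pow, Finset.sum_div]
        refine Finset.sum_congr rfl fun k _ ↦ ?_
        rw [one_pow, div_pow, pow_succ]
        ring
    _ = (s - c) ^ n / s ^ (n + 1) := by
        rw [div_add_one hs, div_pow, div_div, ← pow_succ, neg_add_eq_sub]

section LaplaceTransform

open Complex

theorem hasDerivAt_pow_succ_mul_cexp_neg_mul (s : ℂ) (k : ℕ) (x : ℝ) :
    HasDerivAt (fun t : ℝ ↦ (t : ℂ) ^ (k + 1) * exp (-(s * t)))
      ((k + 1) * (x ^ k * exp (-(s * x))) - s * (x ^ (k + 1) * exp (-(s * x)))) x := by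
  have hpow : HasDerivAt (fun z : ℂ ↦ z ^ (k + 1)) ((k + 1) * x ^ k) x := by
    simpa using hasDerivAt_pow (k + 1) (x : ℂ)
  have hexp : HasDerivAt (fun z : ℂ ↦ exp (-(s * z))) (exp (-(s * x)) * -s) x := by
    simpa using ((hasDerivAt_id (x : ℂ)).const_mul s).neg.cexp
  exact ((hpow.mul hexp).congr_deriv (by ring)).comp_ofReal

variable {s : ℂ}

theorem integrableOn_pow_mul_cexp_neg_mul_Ioi (hs : 0 < s.re) (k : ℕ) :
    IntegrableOn (fun x : ℝ ↦ (x : ℂ) ^ k * exp (-(s * x))) (Ioi 0) := by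
  have hreal : IntegrableOn (fun x : ℝ ↦ x ^ k * Real.exp (-(s.re * x))) (Ioi 0) := by
    simpa using integrableOn_rpow_mul_exp_neg_mul_rpow (s := k) (p := 1)
      (neg_one_lt_zero.trans_le k.cast_nonneg) one_pos hs
  refine Integrable.mono hreal (by fun_prop) (.of_forall fun x ↦ ?_)
  simp [norm_exp]

theorem mul_integral_pow_succ_mul_cexp_neg_mul_Ioi (hs : 0 < s.re) (k : ℕ) :
    s * ∫ x in Ioi (0 : ℝ), (x : ℂ) ^ (k + 1) * exp (-(s * x)) =
      (k + 1) * ∫ x in Ioi (0 : ℝ), (x : ℂ) ^ k * exp (-(s * x)) := by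
  have hderiv := hasDerivAt_pow_succ_mul_cexp_neg_mul s k
  have hint := integrableOn_pow_mul_cexp_neg_mul_Ioi hs
  have hint₀ := (hint k).const_mul (k + 1 : ℂ)
  have hint₁ := (hint (k + 1)).const_mul s
  have hlim := tendsto_zero_of_hasDerivAt_of_integrableOn_Ioi (fun x _ ↦ hderiv x)
    (hint₀.sub hint₁) (hint (k + 1))
  have hFTC := integral_Ioi_of_hasDerivAt_of_tendsto' (fun x _ ↦ hderiv x)
    (hint₀.sub hint₁) hlim
  rw [integral_sub hint₀ hint₁, integral_const_mul, integral_const_mul] at hFTC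
  exact (sub_eq_zero.mp (hFTC.trans (by simp))).symm

theorem integral_pow_mul_cexp_neg_mul_Ioi (hs : 0 < s.re) (k : ℕ) :
    ∫ x in Ioi (0 : ℝ), (x : ℂ) ^ k * exp (-(s * x)) = k.factorial / s ^ (k + 1) := by
  have hs₀ : s ≠ 0 := ne_zero_of_re_pos hs
  induction k with
  | zero => simpa using integral_exp_mul_complex_Ioi (a := -s) (by simpa using hs) 0
  | succ k ih =>
    apply mul_left_cancel₀ hs₀
    rw [mul_integral_pow_succ_mul_cexp_neg_mul_Ioi hs, ih, Nat.factorial_succ]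
    push_cast
    field_simp
    ring

theorem integral_cexp_neg_mul_mul_laguerreC_Ioi (hs : 0 < s.re) (c : ℂ) (n : ℕ) :
    ∫ x in Ioi (0 : ℝ), exp (-(s * x)) * laguerreC n (c * x) = (s - c) ^ n / s ^ (n + 1) := by
  have hexpand (x : ℝ) : exp (-(s * x)) * laguerreC n (c * x) =
      ∑ k ∈ Finset.range (n + 1),
        n.choose k * (-c) ^ k / k.factorial * (x ^ k * exp (-(s * x))) := by
    rw [laguerreC, Finset.mul_sum]
    refine Finset.sum_congr rfl fun k _ ↦ ?_
    rw [← neg_mul c, mul_pow]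
    ring
  simp_rw [hexpand]
  rw [integral_finsetSum _ fun k _ ↦ (integrableOn_pow_mul_cexp_neg_mul_Ioi hs k).const_mul _,
    ← sum_choose_mul_neg_pow_div_pow_succ (ne_zero_of_re_pos hs)]
  refine Finset.sum_congr rfl fun k _ ↦ ?_
  rw [integral_const_mul, integral_pow_mul_cexp_neg_mul_Ioi hs,
    div_mul_div_cancel₀ (Nat.cast_ne_zero.mpr k.factorial_ne_zero)]

end LaplaceTransform

theorem laguerre_fourier_image_general (n : ℕ) {z : ℂ} (hz : -1 < z.im) :
    ∫ x in Ioi (0 : ℝ), Complex.exp ((Complex.I * z - 1) * x) * laguerreC n (2 * x) =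
      Complex.I * (z - Complex.I) ^ n / (z + Complex.I) ^ (n + 1) := by
  have hre : 0 < (1 - Complex.I * z).re := by simpa using neg_lt_iff_pos_add'.mp hz
  have hpole : 1 - Complex.I * z = -Complex.I * (z + Complex.I) := by
    linear_combination Complex.I_sq
  have hzero : 1 - Complex.I * z - 2 = -Complex.I * (z - Complex.I) := by
    linear_combination -Complex.I_sq
  calc ∫ x in Ioi (0 : ℝ), Complex.exp ((Complex.I * z - 1) * x) * laguerreC n (2 * x)
      = (1 - Complex.I * z - 2) ^ n / (1 - Complex.I * z) ^ (n + 1) := by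
        simpa only [← neg_mul, neg_sub] using integral_cexp_neg_mul_mul_laguerreC_Ioi hre 2 n
    _ = (-Complex.I)⁻¹ * ((z - Complex.I) ^ n / (z + Complex.I) ^ (n + 1)) := by
        rw [hzero, hpole, mul_pow, mul_pow, pow_succ (-Complex.I), mul_assoc,
          mul_div_mul_left _ _ (pow_ne_zero n (neg_ne_zero.mpr Complex.I_ne_zero)),
          div_mul_eq_div_div_swap, div_eq_inv_mul]
    _ = Complex.I * (z - Complex.I) ^ n / (z + Complex.I) ^ (n + 1) := by
        rw [inv_neg, Complex.inv_I, neg_neg, mul_div_assoc]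

/-- Fourier image of the Laguerre function `qₙ(2x) = e^{−x} Lₙ(2x)`:
`∫₀^∞ e^{(iδ−1)x} Lₙ(2x) dx = i (δ−i)ⁿ / (δ+i)^{n+1}` for every real `δ`. -/
theorem laguerre_fourier_image (n : ℕ) (δ : ℝ) :
    ∫ x in Ioi (0 : ℝ), Complex.exp ((Complex.I * (δ : ℂ) - 1) * (x : ℂ)) *
        laguerreC n (2 * (x : ℂ)) =
      Complex.I * ((δ : ℂ) - Complex.I) ^ n / ((δ : ℂ) + Complex.I) ^ (n + 1) :=
  laguerre_fourier_image_general n (by simp)
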